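/- Let d ≥ 2, let u : ℤ^d → [0,∞) be admissible, and let x₀ ∈ ℤ^d. Then the sequence (R^k u(x₀))_{k≥1} is eventually constant; in particular the pointwise limit R_{ℤ^d} u(x₀) = lim_{k→∞} R^k u(x₀) exists, so the Schwarz rearrangement of u is well defined. -/

import Mathlib

open Filter Topology

noncomputable section

abbrev ZLat (d : ℕ) := Fin d → ℤ

def stdVec (d : ℕ) (i : Fin d) : Fin d → ℝ := fun j => if j = i then 1 else 0

/-- The set of directions E⃗ ⊆ ℝ^d. -/
def Evec (d : ℕ) : Set (Fin d → ℝ) :=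
  {e | (∃ i, e = stdVec d i) ∨
    (∃ i j : Fin d, i < j ∧ e = fun k => (stdVec d i k + stdVec d j k) / 2) ∨
    (∃ i j : Fin d, i < j ∧ e = fun k => (stdVec d i k - stdVec d j k) / 2)}

/-- A fixed enumeration of E⃗ (for d = 2 it is e₁, e₂, (e₁+e₂)/2, (e₁-e₂)/2). -/
def EvecList (d : ℕ) : List (Fin d → ℝ) :=
  ((List.finRange d).map (stdVec d)) ++
  ((List.finRange d).flatMap fun i => (List.finRange d).filterMap fun j =>
    if i < j then some (fun k => (stdVec d i k + stdVec d j k) / 2) else none) ++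
  ((List.finRange d).flatMap fun i => (List.finRange d).filterMap fun j =>
    if i < j then some (fun k => (stdVec d i k - stdVec d j k) / 2) else none)

/-- The n-th largest value of `u`, counted with multiplicity (1-indexed). -/
def nthLargest {α : Type*} (u : α → NNReal) (n : ℕ) : NNReal :=
  sSup {t | ∃ Ω : Finset α, Ω.card = n ∧ ∀ x ∈ Ω, t ≤ u x}

/-- The 1-indexed position of the point with doubled coordinate `m` in the
spiral order 0, 1, −1, 2, −2, … (for even m) resp. 1/2, −1/2, 3/2, −3/2, … (for odd m). -/
def posIdx (m : ℤ) : ℕ := (if 0 < m then m else 1 - m).toNat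

/-- `x` and `y` lie on a common line with direction `e`. -/
def sameLine {d : ℕ} (e : Fin d → ℝ) (x y : ZLat d) : Prop :=
  ∃ c : ℝ, (fun i => (x i : ℝ) - (y i : ℝ)) = c • e

/-- Twice the inner product ⟨e, x⟩, as an integer. -/
def pairing {d : ℕ} (e : Fin d → ℝ) (x : ZLat d) : ℤ :=
  ⌊2 * ∑ i, e i * (x i : ℝ)⌋

/-- One-step rearrangement `R_e`. -/
def stepR {d : ℕ} (e : Fin d → ℝ) (u : ZLat d → NNReal) : ZLat d → NNReal :=
  fun x => nthLargest (fun y : {y : ZLat d // sameLine e x y} => u y.1) (posIdx (pairing e x))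

/-- `R^k u` : k successive one-step rearrangements cycling through the fixed enumeration. -/
def iterR (d : ℕ) (u : ZLat d → NNReal) : ℕ → ZLat d → NNReal
  | 0 => u
  | k + 1 => stepR ((EvecList d).getD (k % (EvecList d).length) 0) (iterR d u k)

/-- The Schwarz rearrangement on ℤ^d : pointwise limit of `R^k u`. -/
def RZd (d : ℕ) (u : ZLat d → NNReal) : ZLat d → NNReal :=
  fun x => limUnder atTop fun k => iterR d u k x

def Admissible {α : Type*} (u : α → NNReal) : Prop :=
  ∀ t : NNReal, 0 < t → {x | t < u x}.Finite

def Equimeasurable {α : Type*} (u v : α → NNReal) : Prop :=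
  ∀ t : NNReal, 0 < t → Nonempty ({x | t < u x} ≃ {x | t < v x})

/-- Graph distance (ℓ¹ distance) on the lattice ℤ^d. -/
def latDist {d : ℕ} (x y : ZLat d) : ℕ := ∑ i, (x i - y i).natAbs

/-- The i-th standard basis vector of ℤ^d. -/
def latE {d : ℕ} (i : Fin d) : ZLat d := fun j => if j = i then 1 else 0

/-- ‖∇u‖_p^p : the p-Sobolev energy, summing over each edge {x, x+e_i} once. -/
def gradEnergy (d : ℕ) (p : ℝ) (u : ZLat d → NNReal) : ENNReal :=
  ∑' (x : ZLat d) (i : Fin d), ENNReal.ofReal (|(u (x + latE i) : ℝ) - (u x : ℝ)| ^ p)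

/-- ‖∇u‖_p. -/
def gradNorm (d : ℕ) (p : ℝ) (u : ZLat d → NNReal) : ENNReal :=
  gradEnergy d p u ^ (1 / p)

/-- Graph automorphism of the lattice graph ℤ^d. -/
def IsLatAuto {d : ℕ} (σ : ZLat d ≃ ZLat d) : Prop :=
  ∀ x y : ZLat d, latDist (σ x) (σ y) = 1 ↔ latDist x y = 1

def Supermodular (G : NNReal → NNReal → NNReal) : Prop :=
  ∀ s t s₀ t₀ : NNReal, G (s + s₀) t + G s (t + t₀) ≤ G (s + s₀) (t + t₀) + G s t

def StrictlySupermodular (G : NNReal → NNReal → NNReal) : Prop :=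
  ∀ s t s₀ t₀ : NNReal, 0 < s₀ → 0 < t₀ →
    G (s + s₀) t + G s (t + t₀) < G (s + s₀) (t + t₀) + G s t

/-- The values of `u` are strictly decreasing: a₁ > a₂ > a₃ > ⋯ . -/
def StrictRan {α : Type*} (u : α → NNReal) : Prop :=
  ∀ n : ℕ, 0 < n → nthLargest u (n + 1) < nthLargest u n

/-!
The rearrangement `R_e` acts on each level set `{u > t}` by compressing it along the lines of
direction `e`. A compression moves the points of a finite set injectively towards the front of their
lines, and this decreases the squared distance to a point slightly off the origin unless the set is
already compressed. Hence the iterates of a finite set stabilise, and the final set is stable: it is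
an initial segment of every line with direction in `E⃗`.

If `u` has finite support, only finitely many level sets occur and all of them stabilise. Otherwise
the union of the final sets of all positive levels is infinite and stable, and such a set is all of
ℤ^d: it has points with one arbitrarily large coordinate, the diagonal directions spread the size of
this coordinate to all others, and the axis directions then fill a box. So some level `t > 0` is
eventually exceeded at `x₀`, and from then on the value at `x₀` only depends on levels at least `t`,
that is, on the iterates of subsets of the finite set `{u > t}`, which are finite in number.
-/

lemma mem_image_count_iff {S : Set ℕ} [DecidablePred (· ∈ S)] (hS : S.Finite) {n : ℕ} :
    n ∈ Nat.count (· ∈ S) '' S ↔ (n : ℕ∞) < S.encard := by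
  rw [hS.encard_eq_coe_toFinset_card, Nat.cast_lt]
  constructor
  · rintro ⟨m, hm, rfl⟩
    exact Nat.count_lt_card (p := (· ∈ S)) hS hm
  · intro hn
    exact ⟨Nat.nth (· ∈ S) n, Nat.nth_mem_of_lt_card hS hn, Nat.count_nth_of_lt_card_finite hS hn⟩

section Compression

variable {α : Type*} {r : Setoid α} {p : α → ℕ} {A : Set α} {x y z : α}

/-- The function `p` numbers the points of every class of `r` by `0, 1, 2, …`: the order in which
a rearrangement along the classes fills them. -/
def EnumeratesClasses (r : Setoid α) (p : α → ℕ) : Prop :=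
  ∀ x, Set.BijOn p {y | r x y} Set.univ

/-- The part of `A` in the class of `x`. -/
def classTrace (r : Setoid α) (A : Set α) (x : α) : Set α :=
  {y ∈ A | r x y}

/-- The compression of `A`: the points of `A` in each class are replaced by the same number of
initial points of that class. It is the rearrangement of an indicator function. -/
def compress (r : Setoid α) (p : α → ℕ) (A : Set α) : Set α :=
  {x | (p x : ℕ∞) < (classTrace r A x).encard}

open Classical in
/-- The number of points of `A` in the class of `x` whose position precedes that of `x`; for
`x ∈ A` this is the position to which compression moves `x`. -/
def traceRank (r : Setoid α) (p : α → ℕ) (A : Set α) (x : α) : ℕ :=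
  Nat.count (· ∈ p '' classTrace r A x) (p x)

lemma traceRank_le : traceRank r p A x ≤ p x := by
  classical exact Nat.count_le _

lemma classTrace_congr (hxy : r x y) : classTrace r A x = classTrace r A y :=
  Set.ext fun _ => and_congr_right fun _ =>
    ⟨fun h => r.trans' (r.symm' hxy) h, fun h => r.trans' hxy h⟩

lemma mem_of_compress_eq (hA : compress r p A = A) (hx : x ∈ A) (hxy : r x y) (hp : p y ≤ p x) :
    y ∈ A := by
  rw [← hA] at hx ⊢
  have hx : (p x : ℕ∞) < (classTrace r A x).encard := hx
  rw [classTrace_congr hxy] at hx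
  exact lt_of_le_of_lt (Nat.cast_le.2 hp) hx

namespace EnumeratesClasses

lemma eq_of_rel (h : EnumeratesClasses r p) (hxy : r x y) (hp : p x = p y) : x = y :=
  (h x).injOn (r.refl' x) hxy hp

lemma exists_rel_eq (h : EnumeratesClasses r p) (x : α) (n : ℕ) : ∃ y, r x y ∧ p y = n :=
  (h x).surjOn (Set.mem_univ n)

lemma encard_image_classTrace (h : EnumeratesClasses r p) (A : Set α) (x : α) :
    (p '' classTrace r A x).encard = (classTrace r A x).encard :=
  ((h x).injOn.mono fun _ hy => hy.2).encard_image

lemma eq_of_traceRank_eq (h : EnumeratesClasses r p) (hx : x ∈ A) (hy : y ∈ A) (hxy : r x y)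
    (hrank : traceRank r p A x = traceRank r p A y) : x = y := by
  classical
  refine h.eq_of_rel hxy (Nat.count_injective (p := (· ∈ p '' classTrace r A x))
    ⟨x, ⟨hx, r.refl' x⟩, rfl⟩ ⟨y, ⟨hy, hxy⟩, rfl⟩ ?_)
  simpa only [traceRank, ← classTrace_congr hxy] using hrank

lemma mem_compress_iff_exists_traceRank_eq (h : EnumeratesClasses r p) (hA : A.Finite) :
    z ∈ compress r p A ↔ ∃ x ∈ A, r z x ∧ traceRank r p A x = p z := by
  classical
  have hfin : (p '' classTrace r A z).Finite := (hA.subset fun _ hy => hy.1).image p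
  calc
    _ ↔ (p z : ℕ∞) < (p '' classTrace r A z).encard := by
      rw [h.encard_image_classTrace]; rfl
    _ ↔ ∃ x ∈ classTrace r A z, Nat.count (· ∈ p '' classTrace r A z) (p x) = p z := by
      rw [← mem_image_count_iff hfin, Set.image_image, Set.mem_image]
    _ ↔ ∃ x ∈ A, r z x ∧ traceRank r p A x = p z := by
      simp only [classTrace, Set.mem_ofPred_eq, and_assoc]
      refine exists_congr fun x => and_congr_right fun _ => and_congr_right fun hzx => ?_
      rw [traceRank, ← classTrace_congr hzx]
      congr!

lemma exists_injOn_image_eq_compress (h : EnumeratesClasses r p) (hA : A.Finite) :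
    ∃ φ : α → α, Set.InjOn φ A ∧ φ '' A = compress r p A ∧
      ∀ x, r x (φ x) ∧ p (φ x) ≤ p x := by
  choose φ hrel hpos using fun x => h.exists_rel_eq x (traceRank r p A x)
  refine ⟨φ, fun x hx y hy hxy => ?_, Set.ext fun z => ?_,
    fun x => ⟨hrel x, (hpos x).trans_le traceRank_le⟩⟩
  · exact h.eq_of_traceRank_eq hx hy (r.trans' (hrel x) (hxy ▸ r.symm' (hrel y)))
      (by rw [← hpos, hxy, hpos])
  · rw [h.mem_compress_iff_exists_traceRank_eq hA]
    constructor
    · rintro ⟨x, hx, rfl⟩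
      exact ⟨x, hx, r.symm' (hrel x), (hpos x).symm⟩
    · rintro ⟨x, hx, hzx, hrank⟩
      exact ⟨x, hx, (h.eq_of_rel (r.trans' hzx (hrel x)) (hrank.symm.trans (hpos x).symm)).symm⟩

lemma encard_compress (h : EnumeratesClasses r p) (hA : A.Finite) :
    (compress r p A).encard = A.encard := by
  obtain ⟨φ, hinj, himage, -⟩ := h.exists_injOn_image_eq_compress hA
  rw [← himage, hinj.encard_image]

lemma finsum_compress_lt (h : EnumeratesClasses r p) (hA : A.Finite) {V : α → ℕ}
    (hV : ∀ x y, r x y → p x < p y → V x < V y) (hne : compress r p A ≠ A) :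
    ∑ᶠ x ∈ compress r p A, V x < ∑ᶠ x ∈ A, V x := by
  obtain ⟨φ, hinj, himage, hφ⟩ := h.exists_injOn_image_eq_compress hA
  have hlt : ∀ x, φ x ≠ x → V (φ x) < V x := fun x hx =>
    hV _ _ (r.symm' (hφ x).1) ((hφ x).2.lt_of_ne fun heq =>
      hx (h.eq_of_rel (r.symm' (hφ x).1) heq))
  obtain ⟨x, hx, hmove⟩ : ∃ x ∈ A, φ x ≠ x := by
    by_contra! hfix
    exact hne (himage ▸ (Set.image_congr hfix).trans (Set.image_id' A))
  rw [← himage, finsum_mem_image hinj, finsum_mem_eq_finite_toFinset_sum _ hA,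
    finsum_mem_eq_finite_toFinset_sum _ hA]
  refine Finset.sum_lt_sum (fun y _ => ?_) ⟨x, hA.mem_toFinset.2 hx, hlt x hmove⟩
  obtain heq | hy := eq_or_ne (φ y) y
  · rw [heq]
  · exact (hlt y hy).le

end EnumeratesClasses

end Compression

lemma eventuallyConst_of_energy_lt {β γ : Type*} [PartialOrder γ] [WellFoundedLT γ]
    {a : ℕ → β} (E : β → γ)
    (hE : ∀ k, a (k + 1) ≠ a k → E (a (k + 1)) < E (a k)) : EventuallyConst a atTop := by
  have hanti : Antitone (E ∘ a) := antitone_nat_of_succ_le fun k => by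
    obtain heq | hne := eq_or_ne (a (k + 1)) (a k)
    · exact (congrArg E heq).le
    · exact (hE k hne).le
  obtain ⟨K, hK⟩ := WellFoundedLT.antitone_chain_condition hanti
  refine eventuallyConst_atTop_nat.2 ⟨K, fun k hk => ?_⟩
  by_contra hne
  exact (hE k hne).ne ((hK (k + 1) (by omega)).symm.trans (hK k hk))

lemma bijective_posIdx_add_two_mul_sub_one (m : ℤ) :
    Function.Bijective fun s : ℤ => posIdx (m + 2 * s) - 1 := by
  constructor
  · intro s t hst
    simp only [posIdx] at hst
    split_ifs at hst <;> omega
  · intro n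
    by_cases hpar : (2 : ℤ) ∣ n + 1 - m
    · refine ⟨(n + 1 - m) / 2, ?_⟩
      simp only [posIdx]
      split_ifs <;> omega
    · refine ⟨(-n - m) / 2, ?_⟩
      simp only [posIdx]
      split_ifs <;> omega

lemma posIdx_ne_zero (m : ℤ) : posIdx m ≠ 0 := by
  unfold posIdx
  split_ifs <;> omega

lemma posIdx_le_of_abs_lt {m n : ℤ} (h : |m| < |n|) : posIdx m ≤ posIdx n := by
  rw [Int.abs_eq_natAbs, Int.abs_eq_natAbs] at h
  unfold posIdx
  split_ifs <;> omega

lemma posIdx_lt_posIdx_add_two_mul {m s : ℤ} (h : posIdx m < posIdx (m + 2 * s)) :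
    0 < s ∧ 0 < m + s ∨ s < 0 ∧ m + s ≤ 0 := by
  unfold posIdx at h
  split_ifs at h <;> omega

section Directions

variable {d : ℕ} {e : Fin d → ℝ} {g : ZLat d} {κ : ℤ} {x y : ZLat d}

/-- The partition of ℤ^d into lattice lines of direction `e`. -/
def lineSetoid (e : Fin d → ℝ) : Setoid (ZLat d) where
  r := sameLine e
  iseqv :=
    { refl := fun x => ⟨0, by ext; simp⟩
      symm := by
        rintro x y ⟨c, hc⟩
        exact ⟨-c, by rw [neg_smul, ← hc]; ext; simp⟩
      trans := by
        rintro x y z ⟨c, hc⟩ ⟨c', hc'⟩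
        exact ⟨c + c', by rw [add_smul, ← hc, ← hc']; ext; simp⟩ }

/-- The position of `x` on its line, counted from `0`, whereas `posIdx` counts from `1`. -/
def linePos (e : Fin d → ℝ) (x : ZLat d) : ℕ :=
  posIdx (pairing e x) - 1

/-- The rearrangement `R_e` on sets: compression along the lines of direction `e`. -/
abbrev lineCompress (e : Fin d → ℝ) (A : Set (ZLat d)) : Set (ZLat d) :=
  compress (lineSetoid e) (linePos e) A

/-- The vector `g` is the step between consecutive lattice points on a line of direction `e`, and
`e = (κ / 2) g`: `κ = 2` for the axis directions and `κ = 1` for the diagonal ones. In both cases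
`κ |g|² = 2`, so that a step raises the doubled coordinate `pairing e` by `2`. -/
structure IsLatticeStep (e : Fin d → ℝ) (g : ZLat d) (κ : ℤ) : Prop where
  eq_mul : ∀ k, e k = κ / 2 * g k
  exists_eq_one : ∃ i, g i = 1
  mul_dotProduct_self : κ * (g ⬝ᵥ g) = 2

lemma stdVec_eq_single (i k : Fin d) : stdVec d i k = ((Pi.single i 1 : ZLat d) k : ℤ) := by
  simp [stdVec, Pi.single_apply]

lemma isLatticeStep_stdVec (i : Fin d) : IsLatticeStep (stdVec d i) (Pi.single i 1) 2 where
  eq_mul k := by simp [stdVec_eq_single]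
  exists_eq_one := ⟨i, Pi.single_eq_same i 1⟩
  mul_dotProduct_self := by simp

lemma isLatticeStep_add {i j : Fin d} (hij : i ≠ j) :
    IsLatticeStep (fun k => (stdVec d i k + stdVec d j k) / 2)
      (Pi.single i 1 + Pi.single j 1) 1 where
  eq_mul k := by simp only [stdVec_eq_single, Pi.add_apply]; push_cast; ring
  exists_eq_one := ⟨i, by simp [hij]⟩
  mul_dotProduct_self := by simp [hij, hij.symm]

lemma isLatticeStep_sub {i j : Fin d} (hij : i ≠ j) :
    IsLatticeStep (fun k => (stdVec d i k - stdVec d j k) / 2)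
      (Pi.single i 1 - Pi.single j 1) 1 where
  eq_mul k := by simp only [stdVec_eq_single, Pi.sub_apply]; push_cast; ring
  exists_eq_one := ⟨i, by simp [hij]⟩
  mul_dotProduct_self := by simp [hij, hij.symm]

/-- The vector `(d, d - 1, …, 1)`, whose inner product with every direction in `E⃗` is positive. -/
def tilt (d : ℕ) : ZLat d := fun k => d - (k : ℕ)

/-- The squared distance from `x` to `tilt d / (2 d + 1)`, scaled to be a natural number. The centre
is moved slightly off the origin towards `tilt d` so that, of two points at coordinates `±m` on a
line, the one with positive coordinate, which precedes in the order `0, 1, -1, …`, is closer. -/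
def potential (d : ℕ) (x : ZLat d) : ℕ :=
  ∑ k, ((2 * d + 1) * x k - tilt d k).natAbs ^ 2

lemma natCast_potential (x : ZLat d) :
    (potential d x : ℤ) = ((2 * d + 1 : ℤ) • x - tilt d) ⬝ᵥ ((2 * d + 1 : ℤ) • x - tilt d) := by
  simp [potential, dotProduct, sq]

lemma exists_isLatticeStep (he : e ∈ Evec d) :
    ∃ g κ, IsLatticeStep e g κ ∧ 0 < κ * (g ⬝ᵥ tilt d) ∧ κ * (g ⬝ᵥ tilt d) < 2 * d + 1 := by
  rcases he with ⟨i, rfl⟩ | ⟨i, j, hij, rfl⟩ | ⟨i, j, hij, rfl⟩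
  · refine ⟨_, _, isLatticeStep_stdVec i, ?_⟩
    simp only [tilt, single_one_dotProduct]
    omega
  · refine ⟨_, _, isLatticeStep_add hij.ne, ?_⟩
    simp only [tilt, add_dotProduct, single_one_dotProduct]
    omega
  · refine ⟨_, _, isLatticeStep_sub hij.ne, ?_⟩
    simp only [tilt, sub_dotProduct, single_one_dotProduct]
    omega

namespace IsLatticeStep

lemma pos (h : IsLatticeStep e g κ) : 0 < κ :=
  pos_of_mul_pos_left (h.mul_dotProduct_self ▸ two_pos) (dotProduct_star_self_nonneg g)

lemma sameLine_iff (h : IsLatticeStep e g κ) : sameLine e x y ↔ ∃ s : ℤ, y = x + s • g := by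
  have hκ : (κ : ℝ) ≠ 0 := by exact_mod_cast h.pos.ne'
  constructor
  · rintro ⟨c, hc⟩
    obtain ⟨i, hi⟩ := h.exists_eq_one
    have hline : ∀ k, (x k : ℝ) - y k = c * (κ / 2) * g k := fun k => by
      rw [mul_assoc, ← h.eq_mul]
      exact congrFun hc k
    have hc : c * (κ / 2) = x i - y i := by simpa [hi] using (hline i).symm
    refine ⟨y i - x i, funext fun k => ?_⟩
    have hk := hline k
    rw [hc] at hk
    have : (y k : ℝ) = x k + (y i - x i) * g k := by linear_combination -hk
    exact_mod_cast this
  · rintro ⟨s, rfl⟩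
    refine ⟨-(2 * s / κ), funext fun k => ?_⟩
    simp only [Pi.add_apply, Pi.smul_apply, smul_eq_mul, h.eq_mul]
    push_cast
    field_simp
    ring

lemma pairing_eq (h : IsLatticeStep e g κ) (x : ZLat d) : pairing e x = κ * (g ⬝ᵥ x) := by
  have hsum : 2 * ∑ k, e k * (x k : ℝ) = ((κ * (g ⬝ᵥ x) : ℤ) : ℝ) := by
    simp only [dotProduct, h.eq_mul]
    push_cast
    rw [Finset.mul_sum, Finset.mul_sum]
    exact Finset.sum_congr rfl fun k _ => by ring
  rw [pairing, hsum, Int.floor_intCast]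

lemma pairing_add_smul (h : IsLatticeStep e g κ) (x : ZLat d) (s : ℤ) :
    pairing e (x + s • g) = pairing e x + 2 * s := by
  rw [h.pairing_eq, h.pairing_eq, dotProduct_add, dotProduct_smul, smul_eq_mul]
  linear_combination s * h.mul_dotProduct_self

lemma enumeratesClasses (h : IsLatticeStep e g κ) :
    EnumeratesClasses (lineSetoid e) (linePos e) := by
  intro x
  have hbij := bijective_posIdx_add_two_mul_sub_one (pairing e x)
  have hpos : ∀ s : ℤ, linePos e (x + s • g) = posIdx (pairing e x + 2 * s) - 1 := fun s => by
    rw [linePos, h.pairing_add_smul]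
  refine ⟨fun _ _ => Set.mem_univ _, fun y hy z hz hyz => ?_, fun n _ => ?_⟩
  · obtain ⟨s, rfl⟩ := h.sameLine_iff.1 hy
    obtain ⟨t, rfl⟩ := h.sameLine_iff.1 hz
    rw [hpos, hpos] at hyz
    rw [hbij.injective hyz]
  · obtain ⟨s, hs⟩ := hbij.surjective n
    exact ⟨x + s • g, h.sameLine_iff.2 ⟨s, rfl⟩, (hpos s).trans hs⟩

lemma potential_add_smul_sub (h : IsLatticeStep e g κ) (x : ZLat d) (s : ℤ) :
    κ * ((potential d (x + s • g) : ℤ) - potential d x) =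
      2 * (2 * d + 1) * (s * ((2 * d + 1) * (pairing e x + s) - κ * (g ⬝ᵥ tilt d))) := by
  rw [natCast_potential, natCast_potential, h.pairing_eq]
  simp only [smul_add, sub_dotProduct, dotProduct_sub, add_dotProduct, dotProduct_add,
    smul_dotProduct, dotProduct_smul, smul_eq_mul, dotProduct_comm x g, dotProduct_comm (tilt d)]
  linear_combination (2 * d + 1) ^ 2 * s ^ 2 * h.mul_dotProduct_self

lemma potential_lt (h : IsLatticeStep e g κ) (hpos : 0 < κ * (g ⬝ᵥ tilt d))
    (hlt : κ * (g ⬝ᵥ tilt d) < 2 * d + 1) (hxy : sameLine e x y)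
    (hlinePos : linePos e x < linePos e y) : potential d x < potential d y := by
  obtain ⟨s, rfl⟩ := h.sameLine_iff.1 hxy
  have hidx : posIdx (pairing e x) < posIdx (pairing e x + 2 * s) := by
    rw [← h.pairing_add_smul]
    unfold linePos at hlinePos
    omega
  have hfactor : 0 < s * ((2 * d + 1) * (pairing e x + s) - κ * (g ⬝ᵥ tilt d)) := by
    rcases posIdx_lt_posIdx_add_two_mul hidx with ⟨hs, hmid⟩ | ⟨hs, hmid⟩
    · exact mul_pos hs (by nlinarith)
    · exact mul_pos_of_neg_of_neg hs (by nlinarith)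
  have hdiff : 0 < κ * ((potential d (x + s • g) : ℤ) - potential d x) := by
    rw [h.potential_add_smul_sub]
    positivity
  have := pos_of_mul_pos_right hdiff h.pos.le
  omega

end IsLatticeStep

lemma enumeratesClasses_of_mem_Evec (he : e ∈ Evec d) :
    EnumeratesClasses (lineSetoid e) (linePos e) :=
  let ⟨_, _, h, _⟩ := exists_isLatticeStep he
  h.enumeratesClasses

lemma potential_lt_of_mem_Evec (he : e ∈ Evec d) (hxy : sameLine e x y)
    (hlinePos : linePos e x < linePos e y) : potential d x < potential d y :=
  let ⟨_, _, h, hpos, hlt⟩ := exists_isLatticeStep he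
  h.potential_lt hpos hlt hxy hlinePos

end Directions

section Stable

variable {d : ℕ} {A : Set (ZLat d)} {x y : ZLat d}

/-- Along every line with direction in `E⃗`, the set `A` is an initial segment, i.e. `A` is its own
compression. Stated pointwise, the condition passes to unions. -/
def IsStable (A : Set (ZLat d)) : Prop :=
  ∀ e ∈ Evec d, ∀ x ∈ A, ∀ y, sameLine e x y → linePos e y ≤ linePos e x → y ∈ A

lemma isStable_of_lineCompress_eq (hA : ∀ e ∈ Evec d, lineCompress e A = A) : IsStable A :=
  fun e he _ hx _ hxy hpos => mem_of_compress_eq (hA e he) hx hxy hpos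

lemma isStable_iUnion {ι : Sort*} {A : ι → Set (ZLat d)} (hA : ∀ i, IsStable (A i)) :
    IsStable (⋃ i, A i) := by
  intro e he x hx y hxy hpos
  obtain ⟨i, hi⟩ := Set.mem_iUnion.1 hx
  exact Set.mem_iUnion.2 ⟨i, hA i e he x hi y hxy hpos⟩

lemma exists_shift_of_abs_lt {a b r : ℤ} (hr : 0 ≤ r) (ha : 4 * r + 2 ≤ |a|) (hb : |b| < r) :
    ∃ s, |a + b + 2 * s| < |a + b| ∧ r ≤ |a + s| ∧ r ≤ |b + s| := by
  obtain h | h := le_total 0 a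
  · exact ⟨-(2 * r), by grind, by grind, by grind⟩
  · exact ⟨2 * r, by grind, by grind, by grind⟩

namespace IsStable

lemma add_smul_mem (hA : IsStable A) {e : Fin d → ℝ} (he : e ∈ Evec d) {g : ZLat d} {κ : ℤ}
    (hg : IsLatticeStep e g κ) (hx : x ∈ A) {s : ℤ} (hs : |g ⬝ᵥ (x + s • g)| < |g ⬝ᵥ x|) :
    x + s • g ∈ A := by
  refine hA e he x hx _ (hg.sameLine_iff.2 ⟨s, rfl⟩)
    (Nat.sub_le_sub_right (posIdx_le_of_abs_lt ?_) 1)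
  rw [hg.pairing_eq, hg.pairing_eq, abs_mul, abs_mul]
  exact mul_lt_mul_of_pos_left hs (abs_pos.2 hg.pos.ne')

lemma update_mem (hA : IsStable A) (hx : x ∈ A) {i : Fin d} {b : ℤ} (hb : |b| < |x i|) :
    Function.update x i b ∈ A := by
  have hupdate : Function.update x i b = x + (b - x i) • Pi.single i 1 := by
    ext k
    obtain rfl | hk := eq_or_ne k i
    · simp
    · simp [hk]
  rw [hupdate]
  refine hA.add_smul_mem (Or.inl ⟨i, rfl⟩) (isLatticeStep_stdVec i) hx ?_
  simpa using hb

lemma mem_of_forall_abs_lt (hA : IsStable A) (hy : y ∈ A) (hxy : ∀ i, |x i| < |y i|) : x ∈ A := by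
  have hpiecewise : ∀ S : Finset (Fin d), S.piecewise x y ∈ A := by
    intro S
    induction S using Finset.induction_on with
    | empty => rwa [Finset.piecewise_empty]
    | insert i S hi ih =>
      rw [Finset.piecewise_insert]
      exact hA.update_mem ih (by rw [Finset.piecewise_eq_of_notMem _ _ _ hi]; exact hxy i)
  simpa using hpiecewise Finset.univ

lemma add_smul_single_add_single_mem (hA : IsStable A) (hx : x ∈ A) {i j : Fin d} (hij : i ≠ j)
    {s : ℤ} (hs : |x i + x j + 2 * s| < |x i + x j|) :
    x + s • (Pi.single i 1 + Pi.single j 1) ∈ A := by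
  wlog hlt : i < j generalizing i j
  · rw [add_comm (Pi.single i 1)]
    exact this hij.symm (by rwa [add_comm (x j)]) (hij.lt_or_gt.resolve_left hlt)
  refine hA.add_smul_mem (Or.inr (Or.inl ⟨i, j, hlt, rfl⟩)) (isLatticeStep_add hij) hx ?_
  have hdot : ∀ z : ZLat d, (Pi.single i 1 + Pi.single j 1) ⬝ᵥ z = z i + z j := fun z => by
    simp [add_dotProduct]
  have hself : (Pi.single i 1 + Pi.single j 1 : ZLat d) ⬝ᵥ (Pi.single i 1 + Pi.single j 1) = 2 := by
    simpa using (isLatticeStep_add hij).mul_dotProduct_self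
  rwa [dotProduct_add, dotProduct_smul, hself, hdot, smul_eq_mul, mul_comm s]

lemma exists_mem_le_abs_of_unbounded (hA : IsStable A) {i : Fin d}
    (hi : ∀ r : ℤ, ∃ x ∈ A, r ≤ |x i|) (r : ℤ) : ∃ x ∈ A, ∀ j, r ≤ |x j| := by
  suffices hspread : ∀ (S : Finset (Fin d)) (r : ℤ), 0 ≤ r →
      ∃ x ∈ A, r ≤ |x i| ∧ ∀ j ∈ S, r ≤ |x j| by
    obtain ⟨x, hx, -, hr⟩ := hspread Finset.univ (max r 0) (le_max_right _ _)
    exact ⟨x, hx, fun j => (le_max_left _ _).trans (hr j (Finset.mem_univ j))⟩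
  intro S
  induction S using Finset.induction_on with
  | empty =>
    intro r _
    obtain ⟨x, hx, hr⟩ := hi r
    exact ⟨x, hx, hr, by simp⟩
  | insert k S hk ih =>
    intro r hr
    obtain ⟨x, hx, hxi, hxS⟩ := ih (4 * r + 2) (by omega)
    obtain hxk | hxk := le_or_gt r |x k|
    · refine ⟨x, hx, by omega, fun j hj => ?_⟩
      obtain rfl | hj := Finset.mem_insert.1 hj
      · exact hxk
      · linarith [hxS j hj]
    · have hik : i ≠ k := by
        rintro rfl
        omega
      obtain ⟨s, hs, hsi, hsk⟩ := exists_shift_of_abs_lt hr hxi hxk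
      have hyi : r ≤ |(x + s • (Pi.single i 1 + Pi.single k 1) : ZLat d) i| := by
        simpa [hik] using hsi
      refine ⟨_, hA.add_smul_single_add_single_mem hx hik hs, hyi, fun j hj => ?_⟩
      obtain rfl | hji := eq_or_ne j i
      · exact hyi
      obtain rfl | hj := Finset.mem_insert.1 hj
      · simpa [hik.symm] using hsk
      · have hjk : j ≠ k := fun h => hk (h ▸ hj)
        have := hxS j hj
        simp only [Pi.add_apply, Pi.smul_apply, Pi.single_eq_of_ne hji, Pi.single_eq_of_ne hjk,
          add_zero, smul_zero]
        omega

end IsStable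

lemma exists_unbounded_coordinate_of_infinite (hA : A.Infinite) :
    ∃ i, ∀ r : ℤ, ∃ x ∈ A, r ≤ |x i| := by
  by_contra! hbdd
  choose r hr using hbdd
  refine hA ((Set.finite_Icc (-r) r).subset fun x hx => ?_)
  exact ⟨fun i => (abs_le.1 (hr i x hx).le).1, fun i => (abs_le.1 (hr i x hx).le).2⟩

lemma IsStable.eq_univ_of_infinite (hA : IsStable A) (hinf : A.Infinite) : A = Set.univ := by
  refine Set.eq_univ_of_forall fun x => ?_
  obtain ⟨i, hi⟩ := exists_unbounded_coordinate_of_infinite hinf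
  obtain ⟨y, hy, hlarge⟩ := hA.exists_mem_le_abs_of_unbounded hi (∑ j, |x j| + 1)
  refine hA.mem_of_forall_abs_lt hy fun j => (Int.lt_add_one_iff.2 ?_).trans_le (hlarge j)
  exact Finset.single_le_sum (f := fun j => |x j|) (fun _ _ => abs_nonneg _) (Finset.mem_univ j)

end Stable

section LevelSets

variable {α : Type*} {d : ℕ} {t C : NNReal}

lemma nthLargest_le {u : α → NNReal} (hC : ∀ x, u x ≤ C) {n : ℕ} (hn : n ≠ 0) :
    nthLargest u n ≤ C := by
  refine csSup_le' ?_
  rintro s ⟨Ω, hcard, hΩ⟩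
  obtain ⟨x, hx⟩ := Finset.card_ne_zero.1 (hcard ▸ hn)
  exact (hΩ x hx).trans (hC x)

lemma lt_nthLargest_iff {u : α → NNReal} (hC : ∀ x, u x ≤ C) {n : ℕ} (hn : n ≠ 0) :
    t < nthLargest u n ↔ (n : ℕ∞) ≤ {x | t < u x}.encard := by
  constructor
  · intro ht
    obtain ⟨s, ⟨Ω, rfl, hΩ⟩, hts⟩ := exists_lt_of_lt_csSup' ht
    rw [← Set.encard_coe_eq_coe_finsetCard]
    exact Set.encard_le_encard fun x hx => hts.trans_le (hΩ x hx)
  · intro hcard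
    obtain ⟨S, hS, hSn⟩ := Set.exists_subset_encard_eq hcard
    lift S to Finset α using Set.finite_of_encard_eq_coe hSn
    rw [Set.encard_coe_eq_coe_finsetCard, Nat.cast_inj] at hSn
    obtain ⟨x, hx, hmin⟩ := S.exists_min_image u (Finset.card_ne_zero.1 (hSn ▸ hn))
    refine (hS hx).trans_le (le_csSup ⟨C, ?_⟩ ⟨S, hSn, hmin⟩)
    rintro s ⟨Ω, hcard, hΩ⟩
    obtain ⟨y, hy⟩ := Finset.card_ne_zero.1 (hcard ▸ hn)
    exact (hΩ y hy).trans (hC y)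

lemma setOf_lt_stepR {u : ZLat d → NNReal} (hC : ∀ x, u x ≤ C) (e : Fin d → ℝ) (t : NNReal) :
    {x | t < stepR e u x} = lineCompress e {x | t < u x} := by
  ext x
  have htrace : classTrace (lineSetoid e) {y | t < u y} x =
      Subtype.val '' {y : {y // sameLine e x y} | t < u y} := by
    ext y
    constructor
    · rintro ⟨hy, hxy⟩
      exact ⟨⟨y, hxy⟩, hy, rfl⟩
    · rintro ⟨y, hy, rfl⟩
      exact ⟨hy, y.2⟩
  have hpos : (posIdx (pairing e x) : ℕ∞) = linePos e x + 1 := by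
    rw [linePos]
    exact_mod_cast (Nat.sub_one_add_one (posIdx_ne_zero _)).symm
  change t < nthLargest _ _ ↔ (linePos e x : ℕ∞) < (classTrace _ _ x).encard
  rw [lt_nthLargest_iff (u := fun y : {y // sameLine e x y} => u y.1) (fun y => hC y.1)
      (posIdx_ne_zero _),
    htrace, Subtype.val_injective.encard_image, hpos, ENat.natCast_add_one_le_iff]

/-- Successive one-step rearrangements along an arbitrary sequence of directions. -/
def iterStep (e : ℕ → Fin d → ℝ) (u : ZLat d → NNReal) : ℕ → ZLat d → NNReal
  | 0 => u
  | k + 1 => stepR (e k) (iterStep e u k)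

/-- The counterpart of `iterStep` for sets. -/
def iterCompress (e : ℕ → Fin d → ℝ) (A : Set (ZLat d)) : ℕ → Set (ZLat d)
  | 0 => A
  | k + 1 => lineCompress (e k) (iterCompress e A k)

variable {e : ℕ → Fin d → ℝ} {u : ZLat d → NNReal} {A : Set (ZLat d)}

lemma iterStep_le (hC : ∀ x, u x ≤ C) (k : ℕ) (x : ZLat d) : iterStep e u k x ≤ C := by
  induction k generalizing x with
  | zero => exact hC x
  | succ k ih =>
    exact nthLargest_le (fun y : {y // sameLine (e k) x y} => ih y.1) (posIdx_ne_zero _)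

lemma setOf_lt_iterStep (hC : ∀ x, u x ≤ C) (t : NNReal) (k : ℕ) :
    {x | t < iterStep e u k x} = iterCompress e {x | t < u x} k := by
  induction k with
  | zero => rfl
  | succ k ih => rw [iterStep, iterCompress, setOf_lt_stepR (iterStep_le hC k), ih]

lemma lt_iterStep_iff (hC : ∀ x, u x ≤ C) {k : ℕ} {x : ZLat d} :
    t < iterStep e u k x ↔ x ∈ iterCompress e {x | t < u x} k :=
  Set.ext_iff.1 (setOf_lt_iterStep hC t k) x

lemma encard_iterCompress (he : ∀ k, e k ∈ Evec d) (hA : A.Finite) (k : ℕ) :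
    (iterCompress e A k).encard = A.encard := by
  induction k with
  | zero => rfl
  | succ k ih =>
    have hfin : (iterCompress e A k).Finite := by
      rwa [← Set.encard_lt_top_iff, ih, Set.encard_lt_top_iff]
    rw [iterCompress, (enumeratesClasses_of_mem_Evec (he k)).encard_compress hfin, ih]

lemma finite_iterCompress (he : ∀ k, e k ∈ Evec d) (hA : A.Finite) (k : ℕ) :
    (iterCompress e A k).Finite := by
  rwa [← Set.encard_lt_top_iff, encard_iterCompress he hA, Set.encard_lt_top_iff]

lemma eventuallyConst_iterCompress (he : ∀ k, e k ∈ Evec d) (hA : A.Finite) :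
    EventuallyConst (iterCompress e A) atTop :=
  eventuallyConst_of_energy_lt (fun A => ∑ᶠ x ∈ A, potential d x) fun k hne =>
    (enumeratesClasses_of_mem_Evec (he k)).finsum_compress_lt (finite_iterCompress he hA k)
      (fun _ _ => potential_lt_of_mem_Evec (he k)) hne

lemma exists_isStable_eventually_iterCompress_eq (he : ∀ k, e k ∈ Evec d)
    (hfreq : ∀ v ∈ Evec d, ∃ᶠ k in atTop, e k = v) (hA : A.Finite) :
    ∃ B, IsStable B ∧ B.encard = A.encard ∧ ∀ᶠ k in atTop, iterCompress e A k = B := by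
  obtain ⟨K, hK⟩ := eventuallyConst_atTop.1 (eventuallyConst_iterCompress he hA)
  refine ⟨_, isStable_of_lineCompress_eq fun v hv => ?_, encard_iterCompress he hA K,
    eventually_atTop.2 ⟨K, hK⟩⟩
  obtain ⟨k, hev, hk⟩ := ((hfreq v hv).and_eventually (eventually_ge_atTop K)).exists
  calc
    lineCompress v (iterCompress e A K) = iterCompress e A (k + 1) := by
      rw [iterCompress, hev, hK k hk]
    _ = iterCompress e A K := hK (k + 1) (by omega)

lemma Admissible.exists_forall_le {u : α → NNReal} (hu : Admissible u) : ∃ C, ∀ x, u x ≤ C := by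
  obtain ⟨C, hC⟩ := ((hu 1 one_pos).image u).bddAbove
  refine ⟨max C 1, fun x => ?_⟩
  obtain hx | hx := lt_or_ge 1 (u x)
  · exact (hC ⟨x, hx, rfl⟩).trans (le_max_left _ _)
  · exact hx.trans (le_max_right _ _)

lemma exists_pos_le_encard_setOf_lt {u : α → NNReal} (hsupp : {x | 0 < u x}.Infinite) (n : ℕ) :
    ∃ t > 0, (n : ℕ∞) ≤ {x | t < u x}.encard := by
  obtain ⟨S, hS, rfl⟩ := hsupp.exists_subset_card_eq n
  have hsmall : ∀ᶠ t in 𝓝[>] (0 : NNReal), ∀ x ∈ S, t < u x :=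
    S.eventually_all.2 fun x hx => mem_of_superset (Ioo_mem_nhdsGT (hS hx)) fun _ ht => ht.2
  obtain ⟨t, ht, htpos⟩ := (hsmall.and self_mem_nhdsWithin).exists
  refine ⟨t, htpos, ?_⟩
  rw [← Set.encard_coe_eq_coe_finsetCard]
  exact Set.encard_le_encard ht

lemma exists_pos_eventually_lt_iterStep (he : ∀ k, e k ∈ Evec d)
    (hfreq : ∀ v ∈ Evec d, ∃ᶠ k in atTop, e k = v) (hu : Admissible u)
    (hsupp : {x | 0 < u x}.Infinite) (x₀ : ZLat d) :
    ∃ t > 0, ∀ᶠ k in atTop, t < iterStep e u k x₀ := by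
  obtain ⟨C, hC⟩ := hu.exists_forall_le
  choose B hstable hcard hlim using fun t : Set.Ioi (0 : NNReal) =>
    exists_isStable_eventually_iterCompress_eq he hfreq (hu t t.2)
  have hinf : (⋃ t, B t).Infinite := by
    rw [← Set.encard_eq_top_iff, ENat.eq_top_iff_forall_ge]
    intro n
    obtain ⟨t, ht, hn⟩ := exists_pos_le_encard_setOf_lt hsupp n
    calc
      (n : ℕ∞) ≤ (B ⟨t, ht⟩).encard := hn.trans_eq (hcard ⟨t, ht⟩).symm
      _ ≤ (⋃ t, B t).encard := Set.encard_le_encard (Set.subset_iUnion B ⟨t, ht⟩)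
  have hx₀ : x₀ ∈ ⋃ t, B t := by
    rw [(isStable_iUnion hstable).eq_univ_of_infinite hinf]
    exact Set.mem_univ x₀
  obtain ⟨t, ht⟩ := Set.mem_iUnion.1 hx₀
  refine ⟨t, t.2, (hlim t).mono fun k hk => ?_⟩
  rwa [lt_iterStep_iff hC, hk]

lemma eventually_forall_subset_iterCompress_succ_eq (he : ∀ k, e k ∈ Evec d) (hA : A.Finite) :
    ∀ᶠ k in atTop, ∀ B ⊆ A, iterCompress e B (k + 1) = iterCompress e B k :=
  hA.finite_subsets.eventually_all.2 fun _ hB => eventually_atTop.2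
    (eventuallyConst_atTop_nat.1 (eventuallyConst_iterCompress he (hA.subset hB)))

lemma eventuallyConst_iterStep_of_eventually_le (he : ∀ k, e k ∈ Evec d) (hC : ∀ x, u x ≤ C)
    (ht : {x | t < u x}.Finite) {x₀ : ZLat d} (hle : ∀ᶠ k in atTop, t ≤ iterStep e u k x₀) :
    EventuallyConst (fun k => iterStep e u k x₀) atTop := by
  refine eventuallyConst_atTop_nat.2 (eventually_atTop.1 ?_)
  filter_upwards [eventually_forall_subset_iterCompress_succ_eq he ht, hle,
    (tendsto_add_atTop_nat 1).eventually hle] with k hlevel hk hk'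
  have hiff : ∀ s, t ≤ s → (s < iterStep e u (k + 1) x₀ ↔ s < iterStep e u k x₀) := fun s hs => by
    rw [lt_iterStep_iff hC, lt_iterStep_iff hC, hlevel {x | s < u x} fun x hx => hs.trans_lt hx]
  exact le_antisymm (not_lt.1 fun h => lt_irrefl _ ((hiff _ hk).1 h))
    (not_lt.1 fun h => lt_irrefl _ ((hiff _ hk').2 h))

theorem eventuallyConst_iterStep (he : ∀ k, e k ∈ Evec d)
    (hfreq : ∀ v ∈ Evec d, ∃ᶠ k in atTop, e k = v) (hu : Admissible u) (x₀ : ZLat d) :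
    EventuallyConst (fun k => iterStep e u k x₀) atTop := by
  obtain ⟨C, hC⟩ := hu.exists_forall_le
  obtain hsupp | hsupp := Set.finite_or_infinite {x | 0 < u x}
  · exact eventuallyConst_iterStep_of_eventually_le he hC hsupp (.of_forall fun _ => zero_le)
  · obtain ⟨t, ht, hlt⟩ := exists_pos_eventually_lt_iterStep he hfreq hu hsupp x₀
    exact eventuallyConst_iterStep_of_eventually_le he hC (hu t ht) (hlt.mono fun _ => le_of_lt)

end LevelSets

section CyclicOrder

variable {d : ℕ} {v : Fin d → ℝ}

/-- The direction of the `k`-th step of `iterR`. -/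
def cyclicDirection (d k : ℕ) : Fin d → ℝ :=
  (EvecList d).getD (k % (EvecList d).length) 0

lemma mem_EvecList : v ∈ EvecList d ↔ v ∈ Evec d := by
  simp only [EvecList, Evec, List.mem_append, List.mem_map, List.mem_finRange, true_and,
    List.mem_flatMap, List.mem_filterMap, Option.ite_none_right_eq_some, Option.some.injEq,
    Set.mem_ofPred_eq, or_assoc]
  grind

lemma cyclicDirection_mem_Evec (hd : 0 < d) (k : ℕ) : cyclicDirection d k ∈ Evec d := by
  have hlength : 0 < (EvecList d).length :=
    List.length_pos_of_mem (mem_EvecList.2 (Or.inl ⟨⟨0, hd⟩, rfl⟩))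
  rw [cyclicDirection, List.getD_eq_getElem _ _ (Nat.mod_lt k hlength), ← mem_EvecList]
  exact List.getElem_mem _

lemma frequently_cyclicDirection_eq (hv : v ∈ Evec d) : ∃ᶠ k in atTop, cyclicDirection d k = v := by
  obtain ⟨n, hn, rfl⟩ := List.getElem_of_mem (mem_EvecList.2 hv)
  refine (Nat.frequently_mod_eq hn).mono fun k hk => ?_
  rw [cyclicDirection, hk, List.getD_eq_getElem _ _ hn]

lemma iterR_eq_iterStep (u : ZLat d → NNReal) : iterR d u = iterStep (cyclicDirection d) u := by
  funext k
  induction k with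
  | zero => rfl
  | succ k ih => rw [iterR, iterStep, ih, cyclicDirection]

end CyclicOrder

theorem stmt4_general (d : ℕ) (e : ℕ → Fin d → ℝ) (he : ∀ k, e k ∈ Evec d)
    (hfreq : ∀ v ∈ Evec d, ∃ᶠ k in atTop, e k = v) (u : ZLat d → NNReal) (hu : Admissible u)
    (x₀ : ZLat d) :
    ∃ K : ℕ, (∀ k : ℕ, K ≤ k → iterStep e u k x₀ = iterStep e u K x₀) ∧
      Tendsto (fun k => iterStep e u k x₀) atTop
        (𝓝 (limUnder atTop fun k => iterStep e u k x₀)) := by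
  obtain ⟨K, hK⟩ := eventuallyConst_atTop.1 (eventuallyConst_iterStep he hfreq hu x₀)
  have hlim : Tendsto (fun k => iterStep e u k x₀) atTop (𝓝 (iterStep e u K x₀)) :=
    tendsto_const_nhds.congr' (eventually_atTop.2 ⟨K, fun k hk => (hK k hk).symm⟩)
  exact ⟨K, hK, tendsto_nhds_limUnder ⟨_, hlim⟩⟩

/-- For admissible `u` on ℤ^d (d ≥ 2) and any point x₀, the sequence R^k u(x₀) is
eventually constant; in particular it converges to R_{ℤ^d} u (x₀), so the Schwarz
rearrangement is well defined. -/
theorem stmt4 (d : ℕ) (hd : 2 ≤ d) (u : ZLat d → NNReal) (hu : Admissible u)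
    (x₀ : ZLat d) :
    ∃ K : ℕ, (∀ k : ℕ, K ≤ k → iterR d u k x₀ = iterR d u K x₀) ∧
      Tendsto (fun k => iterR d u k x₀) atTop (𝓝 (RZd d u x₀)) := by
  simpa only [iterR_eq_iterStep, RZd] using stmt4_general d _
    (cyclicDirection_mem_Evec (by omega)) (fun _ => frequently_cyclicDirection_eq) u hu x₀

end
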